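/- arXiv:2206.07356 — 2 statements merged into one kernel-verified Lean document; each statement's English description precedes it below -/
import Mathlib

section
/- One-step expectation bound for Quantile-RaSK in the corrupted (noiseless) case (Theorem 3.3(a)): let λ > 0, f(x) = λ‖x‖₁ + (1/2)‖x‖², let A ∈ ℝ^{m×n} be full rank with unit-norm rows a_1ᵀ, …, a_mᵀ, let b = A x̂ + b^c where b^c has exactly βm nonzero entries, A x̂ ≠ 0, and x̂ is the unique solution of min_x f(x) subject to A x = A x̂; assume β < q < 1 − β with qm, βm integers, and that (2q/(q−β))·(2√β/√(1−q−β) + β/(1−q−β))·((|x̂|_min + 2λ)/|x̂|_min) < σ̃_{q−β,min}(A)²/σ_max(A)². Let x ∈ ℝ^n with x* ∈ ∂f(x) ∩ Range(Aᵀ), Q the q-quantile of (|⟨a_i, x⟩ − b_i|)_{i=1}^m, N₂ = {i : |⟨a_i, x⟩ − b_i| ≤ Q} with |N₂| = qm, and for i ∈ N₂ set x_i'* = x* − (⟨a_i, x⟩ − b_i)·a_i, x_i' = S_λ(x_i'*). Then C > 0 and (1/(qm))·Σ_{i ∈ N₂} D_f^{x_i'*}(x_i', x̂) ≤ (1 −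 C)·D_f^{x*}(x, x̂), where C = ((q−β)/(2q²m))·(|x̂|_min/(|x̂|_min + 2λ))·σ̃_{q−β,min}(A)² − (1/(qm))·(2√β/√(1−q−β) + β/(1−q−β))·σ_max(A)². -/
/-- Euclidean inner product on finite-dimensional real coordinate space. -/
noncomputable def ip {I : Type*} [Fintype I] (u v : I → ℝ) : ℝ := ∑ i, u i * v i

/-- Euclidean norm. -/
noncomputable def enorm2 {I : Type*} [Fintype I] (v : I → ℝ) : ℝ :=
  Real.sqrt (∑ i, (v i) ^ 2)

/-- ℓ₁ norm. -/
noncomputable def norm1 {I : Type*} [Fintype I] (v : I → ℝ) : ℝ := ∑ i, |v i|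

/-- ℓ∞ norm. -/
noncomputable def normInf {I : Type*} [Fintype I] (v : I → ℝ) : ℝ := ⨆ i, |v i|

/-- Subdifferential of a convex function. -/
def subdiff {I : Type*} [Fintype I] (f : (I → ℝ) → ℝ) (x : I → ℝ) : Set (I → ℝ) :=
  {g | ∀ y, f y ≥ f x + ip g (y - x)}

/-- Bregman distance `D_f^{g}(x, y)` with respect to `f` and subgradient `g ∈ ∂f(x)`. -/
noncomputable def breg {I : Type*} [Fintype I] (f : (I → ℝ) → ℝ) (g x y : I → ℝ) : ℝ :=
  f y - f x - ip g (y - x)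

/-- Fenchel conjugate. -/
noncomputable def fconj {I : Type*} [Fintype I] (f : (I → ℝ) → ℝ) (u : I → ℝ) : ℝ :=
  ⨆ z, (ip u z - f z)

/-- Soft shrinkage (soft thresholding) operator. -/
noncomputable def softShrink {I : Type*} [Fintype I] (lam : ℝ) (x : I → ℝ) : I → ℝ :=
  fun i => Real.sign (x i) * max (|x i| - lam) 0

/-- Smallest singular value `σ_min(M) = inf_{x ≠ 0} ‖Mx‖/‖x‖`. -/
noncomputable def sigmaMin {I J : Type*} [Fintype I] [Fintype J] (M : Matrix I J ℝ) : ℝ :=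
  sInf {r | ∃ x : J → ℝ, x ≠ 0 ∧ r = enorm2 (M.mulVec x) / enorm2 x}

/-- Largest singular value `σ_max(M) = sup_{x ≠ 0} ‖Mx‖/‖x‖`. -/
noncomputable def sigmaMax {I J : Type*} [Fintype I] [Fintype J] (M : Matrix I J ℝ) : ℝ :=
  sSup {r | ∃ x : J → ℝ, x ≠ 0 ∧ r = enorm2 (M.mulVec x) / enorm2 x}

/-- Frobenius norm. -/
noncomputable def frobNorm {I J : Type*} [Fintype I] [Fintype J] (M : Matrix I J ℝ) : ℝ :=
  Real.sqrt (∑ i, ∑ j, (M i j) ^ 2)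

/-- `‖A‖_{1,2} = sqrt (∑ i ‖a_i‖₁²)` where `a_iᵀ` are the rows of `A`. -/
noncomputable def norm12 {m n : ℕ} (A : Matrix (Fin m) (Fin n) ℝ) : ℝ :=
  Real.sqrt (∑ i, (norm1 (A i)) ^ 2)

/-- Column submatrix `A_J`. -/
noncomputable def colSub {m n : ℕ} (A : Matrix (Fin m) (Fin n) ℝ) (J : Finset (Fin n)) :
    Matrix (Fin m) {j // j ∈ J} ℝ := A.submatrix id Subtype.val

/-- Row submatrix `A_I`. -/
noncomputable def rowSub {m n : ℕ} (A : Matrix (Fin m) (Fin n) ℝ) (I : Finset (Fin m)) :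
    Matrix {i // i ∈ I} (Fin n) ℝ := A.submatrix Subtype.val id

/-- Submatrix `A_{I,J}` with rows in `I` and columns in `J`. -/
noncomputable def subMat {m n : ℕ} (A : Matrix (Fin m) (Fin n) ℝ)
    (I : Finset (Fin m)) (J : Finset (Fin n)) :
    Matrix {i // i ∈ I} {j // j ∈ J} ℝ := A.submatrix Subtype.val Subtype.val

/-- `σ̃_min(A) = min{σ_min(A_J) : J ⊆ {1,…,n}, A_J ≠ 0}`. -/
noncomputable def sigmaTildeMin {m n : ℕ} (A : Matrix (Fin m) (Fin n) ℝ) : ℝ :=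
  sInf {r | ∃ J : Finset (Fin n), colSub A J ≠ 0 ∧ r = sigmaMin (colSub A J)}

/-- `σ̃_{q−β,min}(A)` (with `k = (q−β)m`): min of `σ_min(A_{I,J})` over `|I| = k` and
`J` nonempty. -/
noncomputable def sigmaTildeQBMin {m n : ℕ} (A : Matrix (Fin m) (Fin n) ℝ) (k : ℕ) : ℝ :=
  sInf {r | ∃ (I : Finset (Fin m)) (J : Finset (Fin n)),
    I.card = k ∧ J.Nonempty ∧ r = sigmaMin (subMat A I J)}

/-- Variant of `σ̃_{q−β,min}(A)` requiring moreover `A_J ≠ 0`. -/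
noncomputable def sigmaTildeQBMin' {m n : ℕ} (A : Matrix (Fin m) (Fin n) ℝ) (k : ℕ) : ℝ :=
  sInf {r | ∃ (I : Finset (Fin m)) (J : Finset (Fin n)),
    I.card = k ∧ J.Nonempty ∧ colSub A J ≠ 0 ∧ r = sigmaMin (subMat A I J)}

/-- `σ_{q−β,min}(A)` (with `k = (q−β)m`): min of `σ_min(A_I)` over `|I| = k`. -/
noncomputable def sigmaQBMin {m n : ℕ} (A : Matrix (Fin m) (Fin n) ℝ) (k : ℕ) : ℝ :=
  sInf {r | ∃ I : Finset (Fin m), I.card = k ∧ r = sigmaMin (rowSub A I)}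

/-- The increasingly sorted rearrangement `y_(1) ≤ … ≤ y_(m)` of a finite tuple. -/
noncomputable def sortedVal {m : ℕ} (y : Fin m → ℝ) : Fin m → ℝ := y ∘ Tuple.sort y

/-- The `q`-quantile of `y_1, …, y_m` in the case where `qm = k` is an integer:
`(y_(k) + y_(k+1))/2` (1-indexed). -/
noncomputable def quantileAt {m : ℕ} (k : ℕ) (y : Fin m → ℝ) : ℝ :=
  if h : 0 < k ∧ k < m then
    (sortedVal y ⟨k - 1, by omega⟩ + sortedVal y ⟨k, h.2⟩) / 2
  else 0

/-- `|x̂|_min = min{|x̂_j| : x̂_j ≠ 0}`. -/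
noncomputable def xminOf {n : ℕ} (xhat : Fin n → ℝ) : ℝ :=
  sInf {r | ∃ j, xhat j ≠ 0 ∧ r = |xhat j|}

/-! Subtracting the smooth part of `f = λ‖·‖₁ + ½‖·‖²` from a subgradient `x* ∈ ∂f(x)` leaves a
subgradient of `λ‖·‖₁`. This gives `½‖x - x̂‖² ≤ D ≤ (|x̂|_min + 2λ) / |x̂|_min · ‖x - x̂‖²` for
`D = D_f^{x*}(x, x̂)`: an entry of `x̂` contributes to the `ℓ₁` part of `D` only if `x` has another
sign there, and such an entry is at least `|x̂|_min` in absolute value and at most `|x_j - x̂_j|`.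

Let `r` be the residual of `x` and `y = A (x - x̂)`, so that `r_i = y_i` on uncorrupted rows. A step
along row `i` changes `D` by at most `r_i² / 2 - r_i y_i`, which is `-y_i² / 2` on an uncorrupted
row and at most `Q |y_i| + Q² / 2` on a corrupted row with `|r_i| ≤ Q`. The selected rows contain
at least `(q - β) m` uncorrupted ones, whose gains add up to at least `½ σ̃² ‖x - x̂‖²`. At least
`(1 - q - β) m` uncorrupted rows are left unselected, each with `|y_i| ≥ Q`, so that
`(1 - q - β) m Q² ≤ ‖y‖² ≤ σ_max² ‖x - x̂‖²`; with Cauchy–Schwarz this bounds the loss on the at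
most `β m` corrupted rows. -/

open Finset Filter Topology
open scoped Matrix

section Euclidean

variable {ι κ : Type*} [Fintype ι] [Fintype κ]

lemma ip_eq_dotProduct (u v : ι → ℝ) : ip u v = u ⬝ᵥ v := rfl

lemma enorm2_nonneg (v : ι → ℝ) : 0 ≤ enorm2 v := Real.sqrt_nonneg _

lemma enorm2_sq (v : ι → ℝ) : enorm2 v ^ 2 = ∑ i, v i ^ 2 :=
  Real.sq_sqrt (sum_nonneg fun _ _ => sq_nonneg _)

lemma enorm2_sq_eq_dotProduct (v : ι → ℝ) : enorm2 v ^ 2 = v ⬝ᵥ v := by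
  rw [enorm2_sq]
  simp only [dotProduct, sq]

lemma enorm2_zero : enorm2 (0 : ι → ℝ) = 0 := by simp [enorm2]

lemma enorm2_pos {v : ι → ℝ} (hv : v ≠ 0) : 0 < enorm2 v := by
  obtain ⟨i, hi⟩ := Function.ne_iff.1 hv
  exact Real.sqrt_pos.2 (sum_pos' (fun _ _ => sq_nonneg _) ⟨i, mem_univ i, sq_pos_of_ne_zero hi⟩)

lemma ip_le_half_sq_add_half_sq (u v : ι → ℝ) :
    ip u v ≤ enorm2 u ^ 2 / 2 + enorm2 v ^ 2 / 2 := by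
  have h : 0 ≤ enorm2 (u - v) ^ 2 := sq_nonneg _
  simp only [enorm2_sq_eq_dotProduct, ip_eq_dotProduct, sub_dotProduct, dotProduct_sub,
    dotProduct_comm v u] at h ⊢
  linarith

lemma enorm2_mulVec_le_frobNorm_mul (M : Matrix ι κ ℝ) (v : κ → ℝ) :
    enorm2 (M *ᵥ v) ≤ frobNorm M * enorm2 v := by
  rw [frobNorm, enorm2, enorm2, ← Real.sqrt_mul (by positivity)]
  refine Real.sqrt_le_sqrt ?_
  rw [sum_mul]
  exact sum_le_sum fun i _ => sum_mul_sq_le_sq_mul_sq univ (M i) v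

lemma enorm2_mulVec_le_sigmaMax_mul (M : Matrix ι κ ℝ) (v : κ → ℝ) :
    enorm2 (M *ᵥ v) ≤ sigmaMax M * enorm2 v := by
  rcases eq_or_ne v 0 with rfl | hv
  · simp [enorm2_zero]
  rw [← div_le_iff₀ (enorm2_pos hv)]
  refine le_csSup ⟨frobNorm M, ?_⟩ ⟨v, hv, rfl⟩
  rintro _ ⟨w, hw, rfl⟩
  exact (div_le_iff₀ (enorm2_pos hw)).2 (enorm2_mulVec_le_frobNorm_mul M w)

lemma enorm2_mulVec_sq_le_sigmaMax_sq_mul (M : Matrix ι κ ℝ) (v : κ → ℝ) :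
    enorm2 (M *ᵥ v) ^ 2 ≤ sigmaMax M ^ 2 * enorm2 v ^ 2 := by
  rw [← mul_pow]
  exact pow_le_pow_left₀ (enorm2_nonneg _) (enorm2_mulVec_le_sigmaMax_mul M v) 2

lemma sigmaMin_nonneg (M : Matrix ι κ ℝ) : 0 ≤ sigmaMin M := by
  refine Real.sInf_nonneg ?_
  rintro _ ⟨w, -, rfl⟩
  exact div_nonneg (enorm2_nonneg _) (enorm2_nonneg _)

lemma sigmaMin_mul_le_enorm2_mulVec (M : Matrix ι κ ℝ) (v : κ → ℝ) :
    sigmaMin M * enorm2 v ≤ enorm2 (M *ᵥ v) := by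
  rcases eq_or_ne v 0 with rfl | hv
  · simp [enorm2_zero]
  rw [← le_div_iff₀ (enorm2_pos hv)]
  refine csInf_le ⟨0, ?_⟩ ⟨v, hv, rfl⟩
  rintro _ ⟨w, -, rfl⟩
  exact div_nonneg (enorm2_nonneg _) (enorm2_nonneg _)

end Euclidean

section RestrictedSingularValue

variable {m n : ℕ} (A : Matrix (Fin m) (Fin n) ℝ)

lemma sigmaTildeQBMin_nonneg (k : ℕ) : 0 ≤ sigmaTildeQBMin A k := by
  refine Real.sInf_nonneg ?_
  rintro _ ⟨I, J, -, -, rfl⟩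
  exact sigmaMin_nonneg _

lemma sigmaTildeQBMin_mul_le_enorm2_subMat_mulVec (I : Finset (Fin m)) {J : Finset (Fin n)}
    (hJ : J.Nonempty) (w : {j // j ∈ J} → ℝ) :
    sigmaTildeQBMin A #I * enorm2 w ≤ enorm2 (subMat A I J *ᵥ w) := by
  have hle : sigmaTildeQBMin A #I ≤ sigmaMin (subMat A I J) := by
    refine csInf_le ⟨0, ?_⟩ ⟨I, J, rfl, hJ, rfl⟩
    rintro _ ⟨I', J', -, -, rfl⟩
    exact sigmaMin_nonneg _
  exact (mul_le_mul_of_nonneg_right hle (enorm2_nonneg w)).trans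
    (sigmaMin_mul_le_enorm2_mulVec _ w)

lemma enorm2_restrict_univ_sq (v : Fin n → ℝ) :
    enorm2 (fun j : {j // j ∈ (univ : Finset (Fin n))} => v j) ^ 2 = enorm2 v ^ 2 := by
  rw [enorm2_sq, enorm2_sq]
  exact sum_coe_sort univ fun j => v j ^ 2

lemma enorm2_subMat_univ_mulVec_sq (I : Finset (Fin m)) (v : Fin n → ℝ) :
    enorm2 (subMat A I univ *ᵥ fun j => v j) ^ 2 = ∑ i ∈ I, (A *ᵥ v) i ^ 2 := by
  rw [enorm2_sq, ← sum_coe_sort I fun i => (A *ᵥ v) i ^ 2]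
  refine sum_congr rfl fun i _ => congrArg (· ^ 2) ?_
  exact sum_coe_sort univ fun j => A i j * v j

lemma sigmaTildeQBMin_sq_mul_le {k : ℕ} {I : Finset (Fin m)} (hk : k ≤ #I) (v : Fin n → ℝ) :
    sigmaTildeQBMin A k ^ 2 * enorm2 v ^ 2 ≤ ∑ i ∈ I, (A *ᵥ v) i ^ 2 := by
  rcases eq_or_ne v 0 with rfl | hv
  · simp [enorm2_zero]
  obtain ⟨j, -⟩ := Function.ne_iff.1 hv
  obtain ⟨I', hI', rfl⟩ := exists_subset_card_eq hk
  have hσ := pow_le_pow_left₀ (mul_nonneg (sigmaTildeQBMin_nonneg A #I') (enorm2_nonneg _))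
    (sigmaTildeQBMin_mul_le_enorm2_subMat_mulVec A I' ⟨j, mem_univ j⟩ fun j => v j) 2
  rw [mul_pow, enorm2_restrict_univ_sq, enorm2_subMat_univ_mulVec_sq] at hσ
  exact hσ.trans (sum_le_sum_of_subset_of_nonneg hI' fun _ _ _ => sq_nonneg _)

end RestrictedSingularValue

section Bregman

variable {κ : Type*} [Fintype κ]

/-- The quadratic regularization `h + ½‖·‖²` of `h`; the sparse objective `λ‖·‖₁ + ½‖·‖²` is the
case `h = λ‖·‖₁`. -/
noncomputable def quadReg (h : (κ → ℝ) → ℝ) : (κ → ℝ) → ℝ :=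
  fun x => h x + (1 / 2) * enorm2 x ^ 2

lemma breg_nonneg {f : (κ → ℝ) → ℝ} {g x : κ → ℝ} (hg : g ∈ subdiff f x) (y : κ → ℝ) :
    0 ≤ breg f g x y := by
  have hy := hg y
  unfold breg
  linarith

lemma breg_three_point (f : (κ → ℝ) → ℝ) (g g' x y z : κ → ℝ) :
    breg f g' z y = breg f g x y - breg f g x z + ip (g - g') (y - z) := by
  simp only [breg, ip_eq_dotProduct, sub_dotProduct, dotProduct_sub]
  ring

lemma breg_quadReg (h : (κ → ℝ) → ℝ) (g x y : κ → ℝ) :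
    breg (quadReg h) g x y = breg h (g - x) x y + enorm2 (x - y) ^ 2 / 2 := by
  simp only [breg, quadReg, ip_eq_dotProduct, enorm2_sq_eq_dotProduct, sub_dotProduct,
    dotProduct_sub, dotProduct_comm y x]
  ring

lemma breg_segment_le {h : (κ → ℝ) → ℝ} (hh : ConvexOn ℝ Set.univ h) (s x y : κ → ℝ) {e : ℝ}
    (he₀ : 0 ≤ e) (he₁ : e ≤ 1) :
    breg h s x (x + e • (y - x)) ≤ e * breg h s x y := by
  have hconv := hh.2 (Set.mem_univ x) (Set.mem_univ y) (sub_nonneg.2 he₁) he₀ (by ring)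
  have hseg : (1 - e) • x + e • y = x + e • (y - x) := by module
  rw [hseg, smul_eq_mul, smul_eq_mul] at hconv
  simp only [breg, add_sub_cancel_left, ip_eq_dotProduct, dotProduct_smul, smul_eq_mul]
  linarith

lemma sub_mem_subdiff_of_mem_subdiff_quadReg {h : (κ → ℝ) → ℝ} (hh : ConvexOn ℝ Set.univ h)
    {g x : κ → ℝ} (hg : g ∈ subdiff (quadReg h) x) : g - x ∈ subdiff h x := by
  intro y
  have hsegment : ∀ e ∈ Set.Ioc (0 : ℝ) 1,
      0 ≤ breg h (g - x) x y + e * (enorm2 (y - x) ^ 2 / 2) := by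
    rintro e ⟨he₀, he₁⟩
    have hle := breg_nonneg hg (x + e • (y - x))
    rw [breg_quadReg, sub_add_cancel_left, enorm2_sq_eq_dotProduct, neg_dotProduct_neg,
      smul_dotProduct, dotProduct_smul, ← enorm2_sq_eq_dotProduct, smul_eq_mul, smul_eq_mul] at hle
    refine (mul_nonneg_iff_of_pos_left he₀).1 ?_
    linarith [breg_segment_le hh (g - x) x y he₀.le he₁]
  have hlim : Tendsto (fun e : ℝ => breg h (g - x) x y + e * (enorm2 (y - x) ^ 2 / 2))
      (𝓝[>] 0) (𝓝 (breg h (g - x) x y)) := by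
    have hcont : Continuous fun e : ℝ => breg h (g - x) x y + e * (enorm2 (y - x) ^ 2 / 2) := by
      fun_prop
    simpa using (hcont.tendsto 0).mono_left nhdsWithin_le_nhds
  have hnonneg := ge_of_tendsto hlim (eventually_of_mem (Ioc_mem_nhdsGT one_pos) hsegment)
  unfold breg at hnonneg
  linarith

lemma half_enorm2_sub_sq_le_breg_quadReg {h : (κ → ℝ) → ℝ} (hh : ConvexOn ℝ Set.univ h)
    {g x : κ → ℝ} (hg : g ∈ subdiff (quadReg h) x) (y : κ → ℝ) :
    enorm2 (x - y) ^ 2 / 2 ≤ breg (quadReg h) g x y := by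
  rw [breg_quadReg]
  linarith [breg_nonneg (sub_mem_subdiff_of_mem_subdiff_quadReg hh hg) y]

-- The left-hand side is largest when `z` is the primal point `∇f*(g - u)`.
lemma breg_sub_le {f : (κ → ℝ) → ℝ} {g x z : κ → ℝ}
    (hstrong : enorm2 (x - z) ^ 2 / 2 ≤ breg f g x z) (u y : κ → ℝ) :
    breg f (g - u) z y ≤ breg f g x y - ip u (x - y) + enorm2 u ^ 2 / 2 := by
  have hyoung := ip_le_half_sq_add_half_sq u (x - z)
  rw [breg_three_point f g _ x, sub_sub_cancel]
  simp only [ip_eq_dotProduct, dotProduct_sub] at hyoung ⊢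
  linarith

lemma sum_breg_sub_smul_le {ι : Type*} {f : (κ → ℝ) → ℝ} {g x : κ → ℝ}
    (hstrong : ∀ z, enorm2 (x - z) ^ 2 / 2 ≤ breg f g x z) {A : Matrix ι κ ℝ}
    (hrows : ∀ i, enorm2 (A i) = 1) (N : Finset ι) (r : ι → ℝ) (z : ι → κ → ℝ) (y : κ → ℝ) :
    ∑ i ∈ N, breg f (g - r i • A i) (z i) y ≤
      #N * breg f g x y + ∑ i ∈ N, (r i ^ 2 / 2 - r i * (A *ᵥ (x - y)) i) := by
  rw [← nsmul_eq_mul, ← sum_const, ← sum_add_distrib]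
  refine sum_le_sum fun i _ => (breg_sub_le (hstrong (z i)) (r i • A i) y).trans_eq ?_
  have hnorm : enorm2 (r i • A i) ^ 2 = r i ^ 2 := by
    rw [enorm2_sq_eq_dotProduct, smul_dotProduct, dotProduct_smul, ← enorm2_sq_eq_dotProduct,
      hrows, smul_eq_mul, smul_eq_mul]
    ring
  rw [hnorm, ip_eq_dotProduct, smul_dotProduct, smul_eq_mul, Matrix.mulVec]
  ring

end Bregman

section SoftThresholding

lemma convexOn_mul_norm1 {κ : Type*} [Fintype κ] {lam : ℝ} (hlam : 0 ≤ lam) :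
    ConvexOn ℝ Set.univ fun x : κ → ℝ => lam * norm1 x := by
  refine ConvexOn.smul hlam ⟨convex_univ, fun u _ v _ a b ha hb _ => ?_⟩
  simp only [norm1, smul_eq_mul, mul_sum, ← sum_add_distrib]
  refine sum_le_sum fun j _ => (abs_add_le _ _).trans_eq ?_
  simp only [Pi.smul_apply, smul_eq_mul, abs_mul, abs_of_nonneg ha, abs_of_nonneg hb]

lemma mul_abs_sub_mul_le {lam s a t p : ℝ} (hs : |s| ≤ lam) (hsa : s * a = lam * |a|)
    (hp : 0 ≤ p) (ht : t ≠ 0 → p ≤ |t|) :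
    p * (lam * |t| - s * t) ≤ 2 * lam * (a - t) ^ 2 := by
  have hlam : 0 ≤ lam := (abs_nonneg s).trans hs
  rcases eq_or_ne t 0 with rfl | ht₀
  · simpa using mul_nonneg (mul_nonneg zero_le_two hlam) (sq_nonneg a)
  rcases le_or_gt (a * t) 0 with hat | hat
  · have hst : -(s * t) ≤ lam * |t| :=
      (neg_le_abs _).trans (abs_mul s t ▸ mul_le_mul_of_nonneg_right hs (abs_nonneg t))
    calc p * (lam * |t| - s * t)
        ≤ |t| * (2 * (lam * |t|)) := by
          have := abs_nonneg t
          exact (mul_le_mul_of_nonneg_left (by linarith) hp).trans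
            (mul_le_mul_of_nonneg_right (ht ht₀) (by positivity))
      _ = 2 * lam * t ^ 2 := by rw [← sq_abs t]; ring
      _ ≤ 2 * lam * (a - t) ^ 2 :=
          mul_le_mul_of_nonneg_left (by nlinarith [sq_nonneg a]) (by positivity)
  · have hst : s * t = lam * |t| := by
      have ha₀ : a ≠ 0 := left_ne_zero_of_mul hat.ne'
      have hsign : |a| * t = |t| * a := by
        rcases pos_and_pos_or_neg_and_neg_of_mul_pos hat with ⟨ha, ht⟩ | ⟨ha, ht⟩
        · rw [abs_of_pos ha, abs_of_pos ht, mul_comm]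
        · rw [abs_of_neg ha, abs_of_neg ht]; ring
      exact mul_right_cancel₀ ha₀ (by linear_combination t * hsa + lam * hsign)
    rw [hst, sub_self, mul_zero]
    positivity

variable {κ : Type*} [Fintype κ] {lam : ℝ} {s x : κ → ℝ}

lemma mul_abs_add_mul_sub_le_of_mem_subdiff
    (hs : s ∈ subdiff (fun z => lam * norm1 z) x) (j : κ) (t : ℝ) :
    lam * |x j| + s j * (t - x j) ≤ lam * |t| := by
  classical
  have h := breg_nonneg hs (Function.update x j t)
  have hbreg : breg (fun z => lam * norm1 z) s x (Function.update x j t) =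
      ∑ i, (lam * |Function.update x j t i| - lam * |x i| -
        s i * (Function.update x j t i - x i)) := by
    simp only [breg, norm1, ip, mul_sum, sum_sub_distrib, Pi.sub_apply]
  rw [hbreg, sum_eq_single_of_mem j (mem_univ j)
    fun i _ hij => by simp [Function.update_of_ne hij], Function.update_self] at h
  linarith

lemma mul_eq_mul_abs_of_mem_subdiff
    (hs : s ∈ subdiff (fun z => lam * norm1 z) x) (j : κ) : s j * x j = lam * |x j| := by
  have h₀ := mul_abs_add_mul_sub_le_of_mem_subdiff hs j 0
  have h₂ := mul_abs_add_mul_sub_le_of_mem_subdiff hs j (2 * x j)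
  rw [abs_mul, abs_two] at h₂
  rw [abs_zero] at h₀
  linarith

lemma abs_le_of_mem_subdiff
    (hs : s ∈ subdiff (fun z => lam * norm1 z) x) (j : κ) : |s j| ≤ lam := by
  have heq := mul_eq_mul_abs_of_mem_subdiff hs j
  have hneg := mul_abs_add_mul_sub_le_of_mem_subdiff hs j (-1)
  have hpos := mul_abs_add_mul_sub_le_of_mem_subdiff hs j 1
  rw [abs_neg, abs_one] at hneg
  rw [abs_one] at hpos
  exact abs_le.2 ⟨by linarith, by linarith⟩

lemma mul_breg_norm1_le (hs : s ∈ subdiff (fun z => lam * norm1 z) x)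
    {y : κ → ℝ} {p : ℝ} (hp : 0 ≤ p) (hy : ∀ j, y j ≠ 0 → p ≤ |y j|) :
    p * breg (fun z => lam * norm1 z) s x y ≤ 2 * lam * enorm2 (x - y) ^ 2 := by
  have hbreg : breg (fun z => lam * norm1 z) s x y = ∑ j, (lam * |y j| - s j * y j) := by
    simp only [breg, norm1, ip, mul_sum, ← sum_sub_distrib, Pi.sub_apply]
    refine sum_congr rfl fun j _ => ?_
    linear_combination mul_eq_mul_abs_of_mem_subdiff hs j
  rw [hbreg, enorm2_sq, mul_sum, mul_sum]
  exact sum_le_sum fun j _ => mul_abs_sub_mul_le (abs_le_of_mem_subdiff hs j)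
    (mul_eq_mul_abs_of_mem_subdiff hs j) hp (hy j)

lemma mul_breg_quadReg_norm1_le (hlam : 0 ≤ lam) {g y : κ → ℝ}
    (hg : g ∈ subdiff (quadReg fun z => lam * norm1 z) x) {p : ℝ} (hp : 0 ≤ p)
    (hy : ∀ j, y j ≠ 0 → p ≤ |y j|) :
    p * breg (quadReg fun z => lam * norm1 z) g x y ≤ (p + 2 * lam) * enorm2 (x - y) ^ 2 := by
  have hs := sub_mem_subdiff_of_mem_subdiff_quadReg (convexOn_mul_norm1 hlam) hg
  rw [breg_quadReg]
  linarith [mul_breg_norm1_le hs hp hy, mul_nonneg hp (sq_nonneg (enorm2 (x - y)))]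

end SoftThresholding

section MinimalEntry

variable {n : ℕ} {v : Fin n → ℝ}

lemma xminOf_le_abs {j : Fin n} (hj : v j ≠ 0) : xminOf v ≤ |v j| := by
  refine csInf_le ⟨0, ?_⟩ ⟨j, hj, rfl⟩
  rintro _ ⟨i, -, rfl⟩
  exact abs_nonneg _

lemma xminOf_pos (hv : v ≠ 0) : 0 < xminOf v := by
  obtain ⟨j, hj⟩ := Function.ne_iff.1 hv
  have hfin : {r | ∃ j, v j ≠ 0 ∧ r = |v j|}.Finite :=
    (Set.finite_range fun j => |v j|).subset fun _ ⟨i, _, hr⟩ => ⟨i, hr.symm⟩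
  have hne : {r | ∃ j, v j ≠ 0 ∧ r = |v j|}.Nonempty := ⟨_, j, hj, rfl⟩
  obtain ⟨i, hi, hmin⟩ := hne.csInf_mem hfin
  exact (abs_pos.2 hi).trans_eq hmin.symm

end MinimalEntry

section QuantileSelection

variable {ι : Type*}

lemma exists_threshold_of_smallest {α : Type*} [LinearOrder α] {N : Finset ι} (hN₀ : N.Nonempty)
    {w : ι → α} (hN : ∀ i ∈ N, ∀ j ∉ N, w i ≤ w j) :
    ∃ Q, (∀ i ∈ N, w i ≤ Q) ∧ ∀ j ∉ N, Q ≤ w j := by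
  obtain ⟨i, hi, hmax⟩ := exists_max_image N w hN₀
  exact ⟨w i, hmax, hN i hi⟩

lemma mul_sum_abs_le_sqrt_mul {T : Finset ι} {y : ι → ℝ} {Q ρ Y : ℝ}
    (hY : ∑ i ∈ T, y i ^ 2 ≤ Y) (hQ : #T * Q ^ 2 ≤ ρ * Y) :
    Q * ∑ i ∈ T, |y i| ≤ √ρ * Y := by
  have hY₀ : 0 ≤ Y := (sum_nonneg fun _ _ => sq_nonneg _).trans hY
  calc Q * ∑ i ∈ T, |y i| ≤ √(ρ * Y ^ 2) := by
        refine Real.le_sqrt_of_sq_le ?_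
        calc (Q * ∑ i ∈ T, |y i|) ^ 2 ≤ Q ^ 2 * (#T * ∑ i ∈ T, |y i| ^ 2) := by
              rw [mul_pow]
              exact mul_le_mul_of_nonneg_left sq_sum_le_card_mul_sum_sq (sq_nonneg Q)
          _ = (#T * Q ^ 2) * ∑ i ∈ T, y i ^ 2 := by simp only [sq_abs]; ring
          _ ≤ (#T * Q ^ 2) * Y := mul_le_mul_of_nonneg_left hY (by positivity)
          _ ≤ ρ * Y ^ 2 := by linarith [mul_le_mul_of_nonneg_right hQ hY₀]
    _ = √ρ * Y := by rw [Real.sqrt_mul' _ (sq_nonneg Y), Real.sqrt_sq hY₀]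

lemma le_card_sdiff_of_le_sub [DecidableEq ι] {N B : Finset ι} {k : ℕ} {a b : ℝ}
    (hk : k ≤ a - b) (hN : a ≤ #N) (hB : #B ≤ b) : k ≤ #(N \ B) := by
  have hcard : (#N : ℝ) ≤ #(N \ B) + #B := mod_cast card_le_card_sdiff_add_card
  exact_mod_cast (by linarith : (k : ℝ) ≤ #(N \ B))

variable [Fintype ι] [DecidableEq ι] {N B : Finset ι} {r y : ι → ℝ} {Q : ℝ}

lemma card_compl_union_mul_sq_le_sum_sq (hQ : 0 ≤ Q) (hN : ∀ i ∉ N, Q ≤ |r i|)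
    (hB : ∀ i ∉ B, r i = y i) :
    #(N ∪ B)ᶜ * Q ^ 2 ≤ ∑ i, y i ^ 2 :=
  calc #(N ∪ B)ᶜ * Q ^ 2 = ∑ _i ∈ (N ∪ B)ᶜ, Q ^ 2 := by rw [sum_const, nsmul_eq_mul]
    _ ≤ ∑ i ∈ (N ∪ B)ᶜ, y i ^ 2 := by
        refine sum_le_sum fun i hi => ?_
        rw [mem_compl, notMem_union] at hi
        rw [← hB i hi.2, ← sq_abs (r i)]
        exact pow_le_pow_left₀ hQ (hN i hi.1) 2
    _ ≤ ∑ i, y i ^ 2 := sum_le_univ_sum_of_nonneg fun _ => sq_nonneg _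

lemma card_inter_mul_sq_le_sum_sq {q β : ℝ} (hq : 0 < 1 - q - β)
    (hN : #N = q * Fintype.card ι) (hB : #B ≤ β * Fintype.card ι) (hβ : 0 ≤ β) (hQ : 0 ≤ Q)
    (hQN : ∀ i ∉ N, Q ≤ |r i|) (hry : ∀ i ∉ B, r i = y i) :
    #(N ∩ B) * Q ^ 2 ≤ β / (1 - q - β) * ∑ i, y i ^ 2 := by
  have hinter : (#(N ∩ B) : ℝ) ≤ β * Fintype.card ι :=
    (Nat.cast_le.2 (card_le_card inter_subset_right)).trans hB
  have hcompl : (1 - q - β) * Fintype.card ι ≤ #(N ∪ B)ᶜ := by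
    have hunion : (#(N ∪ B) : ℝ) ≤ #N + #B := mod_cast card_union_le N B
    have hadd : (#(N ∪ B) : ℝ) + #(N ∪ B)ᶜ = Fintype.card ι := mod_cast card_add_card_compl (N ∪ B)
    linarith
  calc #(N ∩ B) * Q ^ 2 ≤ β * Fintype.card ι * Q ^ 2 :=
        mul_le_mul_of_nonneg_right hinter (sq_nonneg Q)
    _ = β / (1 - q - β) * ((1 - q - β) * Fintype.card ι * Q ^ 2) := by field_simp
    _ ≤ β / (1 - q - β) * ∑ i, y i ^ 2 :=
        mul_le_mul_of_nonneg_left ((mul_le_mul_of_nonneg_right hcompl (sq_nonneg Q)).trans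
          (card_compl_union_mul_sq_le_sum_sq hQ hQN hry)) (by positivity)

lemma sum_half_sq_sub_mul_le (hN : ∀ i ∈ N, |r i| ≤ Q) (hB : ∀ i ∉ B, r i = y i) {ρ : ℝ}
    (hρ : #(N ∩ B) * Q ^ 2 ≤ ρ * ∑ i, y i ^ 2) :
    ∑ i ∈ N, (r i ^ 2 / 2 - r i * y i) ≤
      (√ρ + ρ / 2) * ∑ i, y i ^ 2 - (∑ i ∈ N \ B, y i ^ 2) / 2 := by
  have hclean : ∑ i ∈ N \ B, (r i ^ 2 / 2 - r i * y i) = -(∑ i ∈ N \ B, y i ^ 2) / 2 := by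
    rw [← sum_neg_distrib, sum_div]
    refine sum_congr rfl fun i hi => ?_
    rw [hB i (mem_sdiff.1 hi).2]
    ring
  have hcorrupt : ∑ i ∈ N ∩ B, (r i ^ 2 / 2 - r i * y i) ≤
      #(N ∩ B) * Q ^ 2 / 2 + Q * ∑ i ∈ N ∩ B, |y i| := by
    rw [mul_div_assoc, ← nsmul_eq_mul, ← sum_const, mul_sum, ← sum_add_distrib]
    refine sum_le_sum fun i hi => ?_
    have hri := hN i (mem_inter.1 hi).1
    have hsq : r i ^ 2 ≤ Q ^ 2 := sq_le_sq.2 (hri.trans (le_abs_self Q))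
    have hcross : -(r i * y i) ≤ Q * |y i| :=
      (neg_le_abs _).trans (abs_mul (r i) (y i) ▸ mul_le_mul_of_nonneg_right hri (abs_nonneg _))
    linarith
  have hcauchy : Q * ∑ i ∈ N ∩ B, |y i| ≤ √ρ * ∑ i, y i ^ 2 :=
    mul_sum_abs_le_sqrt_mul (sum_le_univ_sum_of_nonneg fun _ => sq_nonneg _) hρ
  rw [← sum_inter_add_sum_sdiff N B]
  linarith

end QuantileSelection

/-- The factor `2√β / √(1 - q - β) + β / (1 - q - β)` multiplying `σ_max²` in the convergence rate;
it measures the damage done by the corrupted rows that pass the quantile test. -/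
noncomputable def corruptionFactor (q β : ℝ) : ℝ :=
  2 * √β / √(1 - q - β) + β / (1 - q - β)

lemma corruptionFactor_nonneg {q β : ℝ} (hβ : 0 ≤ β) (hq : 0 ≤ 1 - q - β) :
    0 ≤ corruptionFactor q β := by
  unfold corruptionFactor
  positivity

lemma sqrt_add_half_eq_corruptionFactor_div_two {q β : ℝ} (hβ : 0 ≤ β) :
    √(β / (1 - q - β)) + β / (1 - q - β) / 2 = corruptionFactor q β / 2 := by
  rw [corruptionFactor, Real.sqrt_div hβ]
  ring

section Rate

variable {m q β p t G σ s : ℝ}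

lemma rate_pos (hm : 0 < m) (hβ : 0 ≤ β) (hβq : β < q) (hp : 0 < p) (ht : 0 < t) (hG : 0 ≤ G)
    (hcond : 2 * q / (q - β) * G * (t / p) < σ ^ 2 / s ^ 2) :
    0 < (q - β) / (2 * q ^ 2 * m) * (p / t) * σ ^ 2 - 1 / (q * m) * G * s ^ 2 := by
  have hq : 0 < q := hβ.trans_lt hβq
  have hqβ : 0 < q - β := sub_pos.2 hβq
  have hs : 0 < s ^ 2 := by
    refine (sq_nonneg s).lt_of_ne fun hs => hcond.not_ge ?_
    rw [← hs, div_zero]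
    positivity
  have hgap : 0 < σ ^ 2 - 2 * q / (q - β) * G * (t / p) * s ^ 2 :=
    sub_pos.2 ((lt_div_iff₀ hs).1 hcond)
  calc 0 < (q - β) / (2 * q ^ 2 * m) * (p / t) *
        (σ ^ 2 - 2 * q / (q - β) * G * (t / p) * s ^ 2) := by positivity
    _ = _ := by field_simp

lemma mul_rate_le (hm : 0 < m) (hβ : 0 ≤ β) (hβq : β < q) (hp : 0 ≤ p) (ht : 0 ≤ t) :
    q * m * ((q - β) / (2 * q ^ 2 * m) * (p / t) * σ ^ 2 - 1 / (q * m) * G * s ^ 2) ≤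
      p / t * σ ^ 2 / 2 - G * s ^ 2 := by
  have hq : 0 < q := hβ.trans_lt hβq
  have hratio : (q - β) / q ≤ 1 := (div_le_one hq).2 (by linarith)
  calc q * m * ((q - β) / (2 * q ^ 2 * m) * (p / t) * σ ^ 2 - 1 / (q * m) * G * s ^ 2)
      = (q - β) / q * (p / t * σ ^ 2 / 2) - G * s ^ 2 := by field_simp
    _ ≤ p / t * σ ^ 2 / 2 - G * s ^ 2 :=
        sub_le_sub_right (mul_le_of_le_one_left (by positivity) hratio) _

end Rate

section QuantileKaczmarz

variable {m n : ℕ} {A : Matrix (Fin m) (Fin n) ℝ} {q β : ℝ} {k : ℕ}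
  {b : Fin m → ℝ} {x xhat g : Fin n → ℝ} {N : Finset (Fin m)}

theorem sum_breg_smallest_residuals_le {f : (Fin n → ℝ) → ℝ} {γ : ℝ}
    (hβ : 0 ≤ β) (hq : 0 < 1 - q - β) (hrows : ∀ i, enorm2 (A i) = 1)
    (hstrong : ∀ z, enorm2 (x - z) ^ 2 / 2 ≤ breg f g x z)
    (hγ : γ * breg f g x xhat ≤ enorm2 (x - xhat) ^ 2)
    (hk : k ≤ (q - β) * m) (hB : (#{i | b i ≠ (A *ᵥ xhat) i} : ℝ) ≤ β * m)
    (hcard : (#N : ℝ) = q * m) (hN₀ : N.Nonempty)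
    (hN : ∀ i ∈ N, ∀ j ∉ N, |ip (A i) x - b i| ≤ |ip (A j) x - b j|)
    (z : Fin m → Fin n → ℝ) :
    ∑ i ∈ N, breg f (g - (ip (A i) x - b i) • A i) (z i) xhat ≤
      (q * m - (γ * sigmaTildeQBMin A k ^ 2 / 2 - corruptionFactor q β * sigmaMax A ^ 2)) *
        breg f g x xhat := by
  obtain ⟨Q, hQN, hQ⟩ := exists_threshold_of_smallest hN₀ hN
  obtain ⟨i, hi⟩ := hN₀
  have hQ₀ : 0 ≤ Q := (abs_nonneg _).trans (hQN i hi)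
  set B : Finset (Fin m) := {i | b i ≠ (A *ᵥ xhat) i}
  have hry : ∀ i ∉ B, ip (A i) x - b i = (A *ᵥ (x - xhat)) i := fun i hi => by
    have hbi : b i = (A *ᵥ xhat) i := by simpa [B] using hi
    rw [hbi, Matrix.mulVec_sub]
    rfl
  have hstep := sum_breg_sub_smul_le hstrong hrows N (fun i => ip (A i) x - b i) z xhat
  have hselect := sum_half_sq_sub_mul_le hQN hry <|
    card_inter_mul_sq_le_sum_sq hq (by simpa using hcard) (by simpa using hB) hβ hQ₀ hQ hry
  have hlow := sigmaTildeQBMin_sq_mul_le A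
    (le_card_sdiff_of_le_sub (sub_mul q β m ▸ hk) hcard.ge hB) (x - xhat)
  have hG := corruptionFactor_nonneg hβ hq.le
  have hloss : corruptionFactor q β / 2 * enorm2 (A *ᵥ (x - xhat)) ^ 2 ≤
      corruptionFactor q β * sigmaMax A ^ 2 * breg f g x xhat :=
    calc corruptionFactor q β / 2 * enorm2 (A *ᵥ (x - xhat)) ^ 2
        ≤ corruptionFactor q β / 2 * (sigmaMax A ^ 2 * enorm2 (x - xhat) ^ 2) :=
          mul_le_mul_of_nonneg_left (enorm2_mulVec_sq_le_sigmaMax_sq_mul A _) (by positivity)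
      _ = corruptionFactor q β * sigmaMax A ^ 2 * (enorm2 (x - xhat) ^ 2 / 2) := by ring
      _ ≤ corruptionFactor q β * sigmaMax A ^ 2 * breg f g x xhat :=
          mul_le_mul_of_nonneg_left (hstrong xhat) (by positivity)
  have hgain := mul_le_mul_of_nonneg_left hγ (sq_nonneg (sigmaTildeQBMin A k))
  rw [hcard] at hstep
  rw [← enorm2_sq, sqrt_add_half_eq_corruptionFactor_div_two hβ] at hselect
  linarith

theorem stmt12_general {lam : ℝ} (hlam : 0 ≤ lam) (hm : 0 < m)
    (hrows : ∀ i, enorm2 (A i) = 1) (hβq : β < q) (hq : q < 1 - β)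
    (hk : k ≤ (q - β) * m) (hxhat : xhat ≠ 0) (hB : (#{i | b i ≠ (A *ᵥ xhat) i} : ℝ) ≤ β * m)
    (hcond : 2 * q / (q - β) * corruptionFactor q β * ((xminOf xhat + 2 * lam) / xminOf xhat) <
      sigmaTildeQBMin A k ^ 2 / sigmaMax A ^ 2)
    (hg : g ∈ subdiff (quadReg fun z => lam * norm1 z) x) (hcard : (#N : ℝ) = q * m)
    (hN : ∀ i ∈ N, ∀ j ∉ N, |ip (A i) x - b i| ≤ |ip (A j) x - b j|)
    {C : ℝ} (hC : C = (q - β) / (2 * q ^ 2 * m) * (xminOf xhat / (xminOf xhat + 2 * lam)) *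
      sigmaTildeQBMin A k ^ 2 - 1 / (q * m) * corruptionFactor q β * sigmaMax A ^ 2) :
    0 < C ∧
    1 / (q * m) * ∑ i ∈ N, breg (quadReg fun z => lam * norm1 z) (g - (ip (A i) x - b i) • A i)
        (softShrink lam (g - (ip (A i) x - b i) • A i)) xhat ≤
      (1 - C) * breg (quadReg fun z => lam * norm1 z) g x xhat := by
  have hm' : (0 : ℝ) < m := Nat.cast_pos.2 hm
  have hβ : 0 ≤ β := nonneg_of_mul_nonneg_left ((Nat.cast_nonneg _).trans hB) hm'
  have hqm : 0 < q * m := mul_pos (hβ.trans_lt hβq) hm'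
  have hc : 0 < 1 - q - β := by linarith
  have hp : 0 < xminOf xhat := xminOf_pos hxhat
  have ht : 0 < xminOf xhat + 2 * lam := by positivity
  have hN₀ : N.Nonempty := card_pos.1 (Nat.cast_pos.1 (hcard ▸ hqm))
  have hγ := mul_breg_quadReg_norm1_le (y := xhat) hlam hg hp.le fun _ => xminOf_le_abs
  rw [← div_le_iff₀' ht, mul_div_right_comm] at hγ
  refine ⟨hC ▸ rate_pos hm' hβ hβq hp ht (corruptionFactor_nonneg hβ hc.le) hcond, ?_⟩
  rw [one_div, inv_mul_le_iff₀ hqm]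
  refine (sum_breg_smallest_residuals_le hβ hc hrows
    (half_enorm2_sub_sq_le_breg_quadReg (convexOn_mul_norm1 hlam) hg) hγ hk hB hcard hN₀ hN
    _).trans ?_
  rw [← mul_assoc, mul_one_sub, hC]
  exact mul_le_mul_of_nonneg_right (sub_le_sub_left (mul_rate_le hm' hβ hβq hp.le ht.le) _)
    (breg_nonneg hg xhat)

end QuantileKaczmarz

/-- one-step expectation bound for Quantile-RaSK with inexact step in
the corrupted noiseless case, Theorem 3.3(a). -/
theorem stmt12 {m n : ℕ} (lam : ℝ) (hlam : 0 < lam)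
    (f : (Fin n → ℝ) → ℝ)
    (hf : f = fun x => lam * norm1 x + (1 / 2) * enorm2 x ^ 2)
    (A : Matrix (Fin m) (Fin n) ℝ)
    (hrank : A.rank = min m n) (hrows : ∀ i, enorm2 (A i) = 1)
    (q β : ℝ) (hβq : β < q) (hq : q < 1 - β)
    (kq kb kqb : ℕ)
    (hkq : (kq : ℝ) = q * m) (hkb : (kb : ℝ) = β * m) (hkqb : (kqb : ℝ) = (q - β) * m)
    (xhat : Fin n → ℝ) (hAx : A.mulVec xhat ≠ 0)
    (hmin : ∀ z, A.mulVec z = A.mulVec xhat → z ≠ xhat → f xhat < f z)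
    (bc : Fin m → ℝ)
    (hbc : (Finset.univ.filter (fun i => bc i ≠ 0)).card = kb)
    (b : Fin m → ℝ) (hb : b = A.mulVec xhat + bc)
    -- condition (3.12)
    (hcond :
      (2 * q / (q - β)) *
          (2 * Real.sqrt β / Real.sqrt (1 - q - β) + β / (1 - q - β)) *
          ((xminOf xhat + 2 * lam) / xminOf xhat) <
        (sigmaTildeQBMin A kqb) ^ 2 / (sigmaMax A) ^ 2)
    (x xs : Fin n → ℝ) (hxs : xs ∈ subdiff f x)
    (hrange : ∃ u : Fin m → ℝ, xs = A.transpose.mulVec u)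
    (Q : ℝ) (hQ : Q = quantileAt kq (fun i => |ip (A i) x - b i|))
    (N2 : Finset (Fin m)) (hN2 : N2 = Finset.univ.filter (fun i => |ip (A i) x - b i| ≤ Q))
    (hN2card : N2.card = kq)
    (xs' x' : Fin m → (Fin n → ℝ))
    (hxs' : ∀ i ∈ N2, xs' i = xs - (ip (A i) x - b i) • A i)
    (hx' : ∀ i ∈ N2, x' i = softShrink lam (xs' i))
    (C : ℝ)
    (hC : C = ((q - β) / (2 * q ^ 2 * m)) *
          (xminOf xhat / (xminOf xhat + 2 * lam)) * (sigmaTildeQBMin A kqb) ^ 2 -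
        (1 / (q * m)) *
          (2 * Real.sqrt β / Real.sqrt (1 - q - β) + β / (1 - q - β)) *
          (sigmaMax A) ^ 2) :
    0 < C ∧
    (1 / (q * m)) * ∑ i ∈ N2, breg f (xs' i) (x' i) xhat ≤
      (1 - C) * breg f xs x xhat := by
  have hm : 0 < m := Nat.pos_of_ne_zero fun h => by subst h; exact hAx (Subsingleton.elim _ _)
  have hxhat : xhat ≠ 0 := fun h => hAx (h ▸ A.mulVec_zero)
  subst hf hb hN2
  rw [sum_congr rfl fun i hi => by rw [hx' i hi, hxs' i hi]]
  exact stmt12_general hlam.le hm hrows hβq hq hkqb.le hxhat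
    (by rw [← hkb, ← hbc]; simp) hcond hxs (hkq ▸ congrArg _ hN2card)
    (by simpa using fun i hi j hj => hi.trans hj.le) hC
end

section
/- Three-point property of Bregman proximal steps (Lemma 4.1): let f : ℝ^n → ℝ be convex, let Φ : ℝ^n → ℝ ∪ {+∞} be convex with dom(Φ) ≠ ∅, let 𝒳 ⊆ dom(Φ) be nonempty and convex, let x₀ ∈ ℝ^n, x₀* ∈ ∂f(x₀), and suppose x₁ ∈ argmin_{x ∈ 𝒳} {Φ(x) + D_f^{x₀*}(x₀, x)}. Then there exists x₁* ∈ ∂f(x₁) such that for every y ∈ 𝒳: Φ(y) + D_f^{x₀*}(x₀, y) ≥ Φ(x₁) + D_f^{x₀*}(x₀, x₁) + D_f^{x₁*}(x₁, y). -/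
/-!
Up to an additive constant, the objective `Φ + D_f(x₀, ·)` is the sum of `f` and the convex function
`Φ - x₀*`. At a minimiser `x₁` of such a sum, a continuous affine function that separates the
epigraph of `f` from the hypograph of `f x₁ + (Φ - x₀*) x₁ - (Φ - x₀*)` touches both at `x₁`, so its
slope `x₁*` lies in `∂f(x₁)` while `-x₁*` is a subgradient of `Φ - x₀*`. The latter subgradient
inequality is a rearrangement of the three-point inequality.
-/

lemma isOpen_strict_epigraph {X β : Type*} [TopologicalSpace X] [TopologicalSpace β]
    [LinearOrder β] [OrderClosedTopology β] {s : Set X} {f : X → β} (hs : IsOpen s)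
    (hf : ContinuousOn f s) : IsOpen {p : X × β | p.1 ∈ s ∧ f p.1 < p.2} :=
  ((hf.comp continuousOn_fst fun _ hp => hp).prodMk continuousOn_snd).isOpen_inter_preimage
    (hs.preimage continuous_fst) isOpen_lt_prod

lemma map_prodMk_eq_add_mul {R M F : Type*} [CommSemiring R] [AddCommMonoid M] [Module R M]
    [FunLike F (M × R) R] [LinearMapClass F R (M × R) R] (L : F) (z : M) (r : R) :
    L (z, r) = L (z, 0) + L (0, 1) * r := by
  rw [mul_comm, ← smul_eq_mul, ← map_smul, ← map_add]
  simp

section Separation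

variable {E : Type*} [TopologicalSpace E] [AddCommGroup E] [Module ℝ E]
  {s t : Set E} {f g h : E → ℝ} {x : E}

/-- The continuous linear functionals `l` that are subgradients at `x` of the restriction of `f`
to `s`, that is, of the extended-valued function equal to `f` on `s` and to `+∞` elsewhere. -/
def subdifferentialOn (s : Set E) (f : E → ℝ) (x : E) : Set (StrongDual ℝ E) :=
  {l | ∀ y ∈ s, f x + l (y - x) ≤ f y}

variable [IsTopologicalAddGroup E] [ContinuousSMul ℝ E]

theorem exists_affine_between_concaveOn_convexOn (hs : IsOpen s) (hf : ConvexOn ℝ s f)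
    (hfc : ContinuousOn f s) (hg : ConcaveOn ℝ t g) (hst : (s ∩ t).Nonempty)
    (hgf : ∀ z ∈ s ∩ t, g z ≤ f z) :
    ∃ (l : StrongDual ℝ E) (a : ℝ), (∀ z ∈ s, l z + a ≤ f z) ∧ ∀ z ∈ t, g z ≤ l z + a := by
  have hdisj : Disjoint {p : E × ℝ | p.1 ∈ s ∧ f p.1 < p.2} {p | p.1 ∈ t ∧ p.2 ≤ g p.1} :=
    Set.disjoint_left.2 fun p hp hp' =>
      (hp.2.trans_le (hp'.2.trans (hgf p.1 ⟨hp.1, hp'.1⟩))).false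
  obtain ⟨L, u, hLf, hLg⟩ := geometric_hahn_banach_open hf.convex_strict_epigraph
    (isOpen_strict_epigraph hs hfc) hg.convex_hypograph hdisj
  set c := L (0, 1)
  have above_f (z : E) (hz : z ∈ s) (r : ℝ) (hr : f z < r) : L (z, 0) + c * r < u := by
    simpa only [map_prodMk_eq_add_mul L z r] using hLf (z, r) ⟨hz, hr⟩
  have at_g (z : E) (hz : z ∈ t) : u ≤ L (z, 0) + c * g z := by
    simpa only [map_prodMk_eq_add_mul L z (g z)] using hLg (z, g z) ⟨hz, le_rfl⟩
  -- The separating hyperplane is not vertical, because the two sets share a vertical line.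
  have hc : c < 0 := by
    obtain ⟨z, hzs, hzt⟩ := hst
    have hgap : 0 ≤ f z + 1 - g z := by linarith [hgf z ⟨hzs, hzt⟩]
    have hprod : c * (f z + 1 - g z) < 0 := by
      linarith [above_f z hzs (f z + 1) (lt_add_one _), at_g z hzt]
    exact neg_of_mul_neg_left hprod hgap
  let l : StrongDual ℝ E := -c⁻¹ • L.comp (ContinuousLinearMap.inl ℝ E ℝ)
  have hl (z : E) : l z + u / c = (u - L (z, 0)) / c := by
    simp only [l, smul_apply, ContinuousLinearMap.comp_apply, ContinuousLinearMap.inl_apply,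
      smul_eq_mul]
    ring
  refine ⟨l, u / c, fun z hz => ?_, fun z hz => ?_⟩
  · refine le_of_forall_gt_imp_ge_of_dense fun r hr => ?_
    rw [hl, div_le_iff_of_neg hc]
    linarith [above_f z hz r hr]
  · rw [hl, le_div_iff_of_neg hc]
    linarith [at_g z hz]

theorem exists_mem_subdifferentialOn_neg_mem_of_isMinOn_add (hs : IsOpen s) (hf : ConvexOn ℝ s f)
    (hfc : ContinuousOn f s) (hh : ConvexOn ℝ t h) (hx : x ∈ s ∩ t)
    (hmin : IsMinOn (f + h) (s ∩ t) x) :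
    ∃ l ∈ subdifferentialOn s f x, -l ∈ subdifferentialOn t h x := by
  obtain ⟨l, a, hlf, hlh⟩ := exists_affine_between_concaveOn_convexOn hs hf hfc
    (hh.neg.add_const (f x + h x)) ⟨x, hx⟩ fun z hz => by
      have hxz : f x + h x ≤ f z + h z := hmin hz
      simp only [Pi.add_apply, Pi.neg_apply]
      linarith
  simp only [Pi.add_apply, Pi.neg_apply] at hlh
  have touch : l x + a = f x := by linarith [hlf x hx.1, hlh x hx.2]
  refine ⟨l, fun y hy => ?_, fun y hy => ?_⟩
  · rw [map_sub]
    linarith [hlf y hy]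
  · rw [neg_apply, map_sub]
    linarith [hlh y hy]

end Separation

section ThreePoint

variable {E : Type*} [TopologicalSpace E] [AddCommGroup E] [Module ℝ E]

/-- The Bregman distance `D_f^l(x, y)` with the subgradient represented by a continuous linear
functional. No relation between `l` and `f` is imposed, so it may be negative when `l` is not a
subgradient of `f` at `x`. -/
def bregmanDist (f : E → ℝ) (l : StrongDual ℝ E) (x y : E) : ℝ :=
  f y - f x - l (y - x)

theorem stmt14_general [IsTopologicalAddGroup E] [ContinuousSMul ℝ E] {s t : Set E} {f Φ : E → ℝ}
    (hs : IsOpen s) (hf : ConvexOn ℝ s f) (hfc : ContinuousOn f s) (hΦ : ConvexOn ℝ t Φ)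
    {x₀ x₁ : E} {l₀ : StrongDual ℝ E} (hx₁ : x₁ ∈ s ∩ t)
    (hmin : IsMinOn (fun x => Φ x + bregmanDist f l₀ x₀ x) (s ∩ t) x₁) :
    ∃ l₁ ∈ subdifferentialOn s f x₁, ∀ y ∈ s ∩ t,
      Φ x₁ + bregmanDist f l₀ x₀ x₁ + bregmanDist f l₁ x₁ y ≤ Φ y + bregmanDist f l₀ x₀ y := by
  have htilt : ConvexOn ℝ t (Φ - ⇑l₀) := hΦ.sub (l₀.toLinearMap.concaveOn hΦ.1)
  have hmin_tilt : IsMinOn (f + (Φ - ⇑l₀)) (s ∩ t) x₁ := by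
    intro x hx
    have hle : Φ x₁ + bregmanDist f l₀ x₀ x₁ ≤ Φ x + bregmanDist f l₀ x₀ x := hmin hx
    simp only [bregmanDist, map_sub] at hle
    simp only [Set.mem_ofPred_eq, Pi.add_apply, Pi.sub_apply]
    linarith
  obtain ⟨l₁, hl₁, hneg⟩ :=
    exists_mem_subdifferentialOn_neg_mem_of_isMinOn_add hs hf hfc htilt hx₁ hmin_tilt
  refine ⟨l₁, hl₁, fun y hy => ?_⟩
  have hsub := hneg y hy.2
  simp only [Pi.sub_apply, neg_apply, map_sub] at hsub
  simp only [bregmanDist, map_sub]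
  linarith

end ThreePoint

/-- The identification of `I → ℝ` with its continuous dual through the pairing `ip`, sending `g` to
`ip g`. -/
noncomputable def ipDual (I : Type*) [Fintype I] [DecidableEq I] :
    (I → ℝ) ≃ₗ[ℝ] StrongDual ℝ (I → ℝ) :=
  (dotProductEquiv ℝ I).trans LinearMap.toContinuousLinearMap

/-- Lemma 4.1, three-point property of Bregman proximal steps. -/
theorem stmt14 {n : ℕ} (f : (Fin n → ℝ) → ℝ) (hf : ConvexOn ℝ Set.univ f)
    (X : Set (Fin n → ℝ)) (hXne : X.Nonempty) (hXconv : Convex ℝ X)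
    (Φ : (Fin n → ℝ) → ℝ) (hΦ : ConvexOn ℝ X Φ)
    (x0 x0s : Fin n → ℝ) (hx0s : x0s ∈ subdiff f x0)
    (x1 : Fin n → ℝ) (hx1 : x1 ∈ X)
    (hmin : ∀ x ∈ X, Φ x1 + breg f x0s x0 x1 ≤ Φ x + breg f x0s x0 x) :
    ∃ x1s ∈ subdiff f x1, ∀ y ∈ X,
      Φ y + breg f x0s x0 y ≥
        Φ x1 + breg f x0s x0 x1 + breg f x1s x1 y := by
  obtain ⟨l, hl, hthree⟩ := stmt14_general (l₀ := ipDual (Fin n) x0s) isOpen_univ hf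
    (hf.continuousOn isOpen_univ) hΦ ⟨Set.mem_univ x1, hx1⟩ fun x hx => hmin x hx.2
  obtain ⟨x1s, rfl⟩ := (ipDual (Fin n)).surjective l
  exact ⟨x1s, fun y => hl y (Set.mem_univ y), fun y hy => hthree y ⟨Set.mem_univ y, hy⟩⟩
end
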